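/- For every r ≥ 2, if (H_n) is a sequence of ordered r-matchings whose sizes satisfy |H_n| ≤ (1/(2r))·(n/log n)^(1/r), then the probability that RM_n^(r) contains a copy of H_n (that is, a subfamily N ⊆ RM_n^(r) of |H_n| edges such that the unique order-preserving bijection from the union of the edges of N onto [r·|H_n|] maps N onto H_n) tends to 1 as n → ∞. -/

import Mathlib

open Finset
open scoped Classical

/-- An ordered `r`-matching of size `n`: a partition of `[r*n] = {1,…,r*n}` into `n`
pairwise disjoint `r`-element subsets (the edges). -/
def IsOrderedMatching (r n : ℕ) (M : Finset (Finset ℕ)) : Prop :=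
  M.card = n ∧ (∀ e ∈ M, e.card = r) ∧
  (∀ e ∈ M, ∀ f ∈ M, e ≠ f → Disjoint e f) ∧
  M.biUnion id = Finset.Icc 1 (r * n)

/-- Two disjoint `r`-element sets `e`, `f` form the `r`-pattern `P`: the unique
order-preserving bijection from `e ∪ f` onto `[2r]` maps the pair `{e, f}` onto `P`. -/
def FormsPattern (r : ℕ) (e f : Finset ℕ) (P : Finset (Finset ℕ)) : Prop :=
  ∃ φ : ℕ → ℕ, StrictMonoOn φ ↑(e ∪ f) ∧
    (e ∪ f).image φ = Finset.Icc 1 (2 * r) ∧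
    ({e.image φ, f.image φ} : Finset (Finset ℕ)) = P

/-- A `Ps`-clique: a family of pairwise disjoint `r`-element subsets of `ℕ`, every two of
which form a pattern belonging to `Ps`. -/
def IsClique (r : ℕ) (Ps : Set (Finset (Finset ℕ))) (K : Finset (Finset ℕ)) : Prop :=
  (∀ e ∈ K, e.card = r) ∧ (∀ e ∈ K, ∀ f ∈ K, e ≠ f → Disjoint e f) ∧
  (∀ e ∈ K, ∀ f ∈ K, e ≠ f → ∃ P ∈ Ps, FormsPattern r e f P)

/-- `z_Ps(M)`: the maximum size of a subfamily of `M` that is a `Ps`-clique. -/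
noncomputable def zClique (r : ℕ) (Ps : Set (Finset (Finset ℕ))) (M : Finset (Finset ℕ)) : ℕ :=
  sSup {k | ∃ K : Finset (Finset ℕ), K ⊆ M ∧ IsClique r Ps K ∧ K.card = k}

/-- All ordered `r`-matchings of size `n` (as a finset). -/
noncomputable def matchingFamilies (r n : ℕ) : Finset (Finset (Finset ℕ)) :=
  ((Finset.Icc 1 (r * n)).powerset.powerset).filter (IsOrderedMatching r n)

/-- The probability of the event `A` for a uniformly random ordered `r`-matching of size `n`. -/
noncomputable def prob (r n : ℕ) (A : Finset (Finset ℕ) → Prop) : ℝ :=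
  (((matchingFamilies r n).filter A).card : ℝ) / ((matchingFamilies r n).card : ℝ)

/-- Expectation of `X` with respect to a uniformly random ordered `r`-matching of size `n`. -/
noncomputable def expect (r n : ℕ) (X : Finset (Finset ℕ) → ℝ) : ℝ :=
  (∑ M ∈ matchingFamilies r n, X M) / ((matchingFamilies r n).card : ℝ)

/-- An `r`-partite `r`-pattern: each edge contains exactly one of `{2i-1, 2i}` for each
`i = 1, …, r`. -/
def IsPartitePattern (r : ℕ) (P : Finset (Finset ℕ)) : Prop :=
  IsOrderedMatching r 2 P ∧
  ∀ e ∈ P, ∀ i ∈ Finset.Icc 1 r, (e ∩ {2 * i - 1, 2 * i}).card = 1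

/-- An `r`-pattern `P` is collectable if there exist arbitrarily large `{P}`-cliques. -/
def Collectable (r : ℕ) (P : Finset (Finset ℕ)) : Prop :=
  ∀ k : ℕ, ∃ K : Finset (Finset ℕ), IsClique r {P} K ∧ K.card = k

/-- The word of a pattern `P` over `{A=true, B=false}`: the `j`-th letter is `true` iff
vertex `j` lies in the edge of `P` containing `1`. -/
noncomputable def patternWord (r : ℕ) (P : Finset (Finset ℕ)) : List Bool :=
  (List.range (2 * r)).map (fun j => decide (∃ e ∈ P, 1 ∈ e ∧ j + 1 ∈ e))

/-- `lam` is a splitting of the word `w` into consecutive blocks of the form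
`A^t B^t` or `B^t A^t` with half-lengths given by `lam`. -/
def IsBlockSplitting (w : List Bool) (lam : List ℕ) : Prop :=
  (∀ t ∈ lam, 1 ≤ t) ∧
  ∃ bs : List Bool, bs.length = lam.length ∧
    w = (List.zipWith (fun t b => List.replicate t b ++ List.replicate t !b) lam bs).flatten

/-- The pattern `P` has composition `lam` (the sequence of half-lengths of the blocks of
its unique splitting). -/
def HasComposition (r : ℕ) (P : Finset (Finset ℕ)) (lam : List ℕ) : Prop :=
  IsBlockSplitting (patternWord r P) lam

/-- Two distinct collectable `r`-patterns are harmonious if they have the same composition. -/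
def Harmonious (r : ℕ) (P Q : Finset (Finset ℕ)) : Prop :=
  P ≠ Q ∧ Collectable r P ∧ Collectable r Q ∧
  ∃ lam : List ℕ, HasComposition r P lam ∧ HasComposition r Q lam

/-- A pair of distinct `r`-patterns is a mismatch if exactly one of them is collectable, or
both are collectable but their compositions differ. -/
def Mismatch (r : ℕ) (P Q : Finset (Finset ℕ)) : Prop :=
  P ≠ Q ∧
  ((Collectable r P ∧ ¬ Collectable r Q) ∨
   (¬ Collectable r P ∧ Collectable r Q) ∨
   (Collectable r P ∧ Collectable r Q ∧
     ¬ ∃ lam : List ℕ, HasComposition r P lam ∧ HasComposition r Q lam))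

/-- The trace of an ordered `r`-matching of size `k` on `[rk]`: the `j`-th letter equals
`i` when `j` is the `i`-th smallest element of the edge containing `j`. -/
noncomputable def trace (r k : ℕ) (M : Finset (Finset ℕ)) : List ℕ :=
  (List.range (r * k)).map (fun j₀ =>
    ((Finset.Icc 1 (r * k)).filter
      (fun x => x ≤ j₀ + 1 ∧ ∃ e ∈ M, j₀ + 1 ∈ e ∧ x ∈ e)).card)

/-- `a_Ps(k)`: the number of `Ps`-cliques of size `k` whose edges partition `[rk]`. -/
noncomputable def cliqueCount (r : ℕ) (Ps : Set (Finset (Finset ℕ))) (k : ℕ) : ℕ :=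
  (((Finset.Icc 1 (r * k)).powerset.powerset).filter
    (fun M => IsOrderedMatching r k M ∧ IsClique r Ps M)).card

/-- The maximum size of any `Ps`-clique whatsoever. -/
noncomputable def maxCliqueSize (r : ℕ) (Ps : Set (Finset (Finset ℕ))) : ℕ :=
  sSup {k | ∃ K : Finset (Finset ℕ), IsClique r Ps K ∧ K.card = k}

/-- `M` contains a copy of the ordered `r`-matching `H` of size `k`: a subfamily `N ⊆ M` of
`k` edges such that the order-preserving bijection from the union of the edges of `N`
onto `[rk]` maps `N` onto `H`. -/
def ContainsCopy (r k : ℕ) (H M : Finset (Finset ℕ)) : Prop :=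
  ∃ N ⊆ M, N.card = k ∧ ∃ φ : ℕ → ℕ,
    StrictMonoOn φ ↑(N.biUnion id) ∧
    (N.biUnion id).image φ = Finset.Icc 1 (r * k) ∧
    N.image (fun e => e.image φ) = H

/-- Delete the `j`-th smallest element of the finite set `e`. -/
def deleteJth (j : ℕ) (e : Finset ℕ) : Finset ℕ :=
  e.filter (fun x => (e.filter (· ≤ x)).card ≠ j)

/-- Relabel the elements of `e` order-preservingly by their ranks in `V`. -/
def relabel (V : Finset ℕ) (e : Finset ℕ) : Finset ℕ :=
  e.image (fun x => (V.filter (· ≤ x)).card)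

/-- `S^(−j)`: delete from each edge of the pattern `S` its `j`-th smallest element and
relabel the remaining vertices order-preservingly. -/
def patternDelete (j : ℕ) (S : Finset (Finset ℕ)) : Finset (Finset ℕ) :=
  (S.image (deleteJth j)).image (relabel ((S.image (deleteJth j)).biUnion id))

/-!
Cut an initial part of `[rn]` into `rk` consecutive blocks of length `2rm`, with
`m = ⌊n / (2rk)⌋`, and colour each vertex by the index of its block. A matching contains a copy of
`H` as soon as every edge `h` of `H` is the colour set of some edge of the matching, since colours
increase along `[rn]`. For fixed `h`, expose the edges at `m` vertices with colours in `h`, one at a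
time. The exposed edges cover at most half of each block, so each of them has colour set `h` with
conditional probability at least `(m/n)^(r-1)`, and all of them fail with probability at most
`exp(-m^r/n^(r-1)) ≤ n^(-3/4)`. A union bound over the `k ≤ n^(1/2)` edges of `H` finishes.
-/

theorem pow_card_le_card_powersetCard_image_eq {α ι : Type*} [DecidableEq ι] {V : Finset α}
    {s : ℕ} (c : α → ι) {h : Finset ι} (hs : ∀ i ∈ h, s ≤ #{x ∈ V | c x = i}) :
    s ^ #h ≤ #{e ∈ V.powersetCard #h | e.image c = h} := by
  set sections := Fintype.piFinset fun i : h ↦ {x ∈ V | c x = i}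
  have hsections {f} (hf : f ∈ sections) (i : h) : f i ∈ V ∧ c (f i) = i :=
    mem_filter.1 (Fintype.mem_piFinset.1 hf i)
  have hmaps : Set.MapsTo (univ.image ·) (sections : Set (h → α))
      ({e ∈ V.powersetCard #h | e.image c = h} : Finset (Finset α)) := by
    intro f hf
    have hinj : Function.Injective f := fun i j hij ↦ Subtype.ext <| by
      rw [← (hsections hf i).2, hij, (hsections hf j).2]
    have hcomp : c ∘ f = Subtype.val := funext fun i ↦ (hsections hf i).2
    refine mem_filter.2 ⟨mem_powersetCard.2 ⟨?_, ?_⟩, ?_⟩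
    · exact image_subset_iff.2 fun i _ ↦ (hsections hf i).1
    · rw [card_image_of_injective _ hinj, card_univ, Fintype.card_coe]
    · rw [image_image, hcomp, univ_eq_attach, attach_image_val]
  have hinj : Set.InjOn (univ.image ·) (sections : Set (h → α)) := by
    intro f hf g hg hfg
    funext i
    have hi : f i ∈ univ.image g := (congrArg (f i ∈ ·) hfg).mp (mem_image_of_mem f (mem_univ i))
    obtain ⟨j, -, hj⟩ := mem_image.1 hi
    have hij : j = i := Subtype.ext <| by rw [← (hsections hg j).2, hj, (hsections hf i).2]
    rw [← hj, hij]
  calc s ^ #h = ∏ _i : h, s := by rw [prod_const, card_univ, Fintype.card_coe]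
    _ ≤ ∏ i : h, #{x ∈ V | c x = i} := prod_le_prod' fun i _ ↦ hs i i.2
    _ = #sections := (Fintype.card_piFinset _).symm
    _ ≤ _ := card_le_card_of_injOn _ hmaps hinj

section MatchingsOn

variable {α β ι : Type*} [DecidableEq α] [DecidableEq β] [DecidableEq ι]
  {r : ℕ} {V e : Finset α} {v : α} {M : Finset (Finset α)} {Q : Finset α → Prop}

/-- The perfect `r`-matchings of a finite vertex set `V`: partitions of `V` into `r`-element
edges. Unlike `matchingFamilies`, this is stable under removing an edge together with its
vertices. -/
noncomputable def matchingsOn (r : ℕ) (V : Finset α) : Finset (Finset (Finset α)) :=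
  {M ∈ V.powerset.powerset | (∀ e ∈ M, #e = r) ∧
    (M : Set (Finset α)).PairwiseDisjoint id ∧ M.biUnion id = V}

/-- The `r`-element subsets of `V` containing `v`: the possible edges at `v` in a perfect
`r`-matching of `V`. -/
def edgesThrough (r : ℕ) (V : Finset α) (v : α) : Finset (Finset α) :=
  {e ∈ V.powersetCard r | v ∈ e}

/-- The perfect `r`-matchings of `V` none of whose edges satisfies `Q`. -/
noncomputable def matchingsAvoiding (r : ℕ) (V : Finset α) (Q : Finset α → Prop) :
    Finset (Finset (Finset α)) :=
  {M ∈ matchingsOn r V | ∀ e ∈ M, ¬ Q e}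

theorem mem_matchingsOn : M ∈ matchingsOn r V ↔
    (∀ e ∈ M, #e = r) ∧ (M : Set (Finset α)).PairwiseDisjoint id ∧ M.biUnion id = V := by
  rw [matchingsOn, mem_filter, and_iff_right_iff_imp, mem_powerset,
    ← biUnion_id_subset_iff_subset_powerset]
  exact fun h ↦ h.2.2.subset

theorem mem_edgesThrough : e ∈ edgesThrough r V v ↔ e ⊆ V ∧ #e = r ∧ v ∈ e := by
  rw [edgesThrough, mem_filter, mem_powersetCard, and_assoc]

theorem card_matchingsAvoiding_le : #(matchingsAvoiding r V Q) ≤ #(matchingsOn r V) :=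
  card_filter_le _ _

theorem subset_of_mem_matchingsOn (hM : M ∈ matchingsOn r V) (he : e ∈ M) : e ⊆ V :=
  (mem_matchingsOn.1 hM).2.2 ▸ subset_biUnion_of_mem id he

theorem disjoint_of_mem_matchingsOn_sdiff {f : Finset α} (hM : M ∈ matchingsOn r (V \ e))
    (hf : f ∈ M) : Disjoint e f :=
  disjoint_sdiff.mono_right (subset_of_mem_matchingsOn hM hf)

theorem insert_mem_matchingsOn (heV : e ⊆ V) (he : #e = r) (hM : M ∈ matchingsOn r (V \ e)) :
    insert e M ∈ matchingsOn r V := by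
  obtain ⟨hcard, hdisj, hunion⟩ := mem_matchingsOn.1 hM
  refine mem_matchingsOn.2 ⟨forall_mem_insert _ _ _ |>.2 ⟨he, hcard⟩, ?_, ?_⟩
  · rw [coe_insert]
    exact hdisj.insert fun f hf _ ↦ disjoint_of_mem_matchingsOn_sdiff hM hf
  · rw [biUnion_insert, hunion, id, union_sdiff_of_subset heV]

theorem erase_mem_matchingsOn (hM : M ∈ matchingsOn r V) (he : e ∈ M) :
    M.erase e ∈ matchingsOn r (V \ e) := by
  obtain ⟨hcard, hdisj, rfl⟩ := mem_matchingsOn.1 hM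
  refine mem_matchingsOn.2 ⟨fun f hf ↦ hcard f (mem_of_mem_erase hf),
    hdisj.subset (coe_subset.2 (erase_subset e M)), ?_⟩
  have he_disj : Disjoint e ((M.erase e).biUnion id) :=
    (disjoint_biUnion_right _ _ _).2 fun f hf ↦
      hdisj he (mem_of_mem_erase hf) (ne_of_mem_erase hf).symm
  conv_rhs => rw [← insert_erase he, biUnion_insert, id, union_sdiff_cancel_left he_disj]

theorem insert_injOn_matchingsOn_sdiff {e' : Finset α} {M' : Finset (Finset α)} (hv : v ∈ e)
    (hv' : v ∈ e') (hM : M ∈ matchingsOn r (V \ e)) (hM' : M' ∈ matchingsOn r (V \ e'))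
    (h : insert e M = insert e' M') : e = e' ∧ M = M' := by
  have notMem {e M} (hv : v ∈ e) (hM : M ∈ matchingsOn r (V \ e)) {f} (hf : v ∈ f) : f ∉ M :=
    fun hfM ↦ disjoint_left.1 (disjoint_of_mem_matchingsOn_sdiff hM hfM) hv hf
  have hee' : e = e' := by
    have : e ∈ insert e' M' := h ▸ mem_insert_self e M
    exact (mem_insert.1 this).resolve_right (notMem hv' hM' hv)
  subst hee'
  exact ⟨rfl, by rw [← erase_insert (notMem hv hM hv), h, erase_insert (notMem hv hM' hv)]⟩

theorem sum_matchingsOn_eq {A : Type*} [AddCommMonoid A] (hv : v ∈ V)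
    (F : Finset (Finset α) → A) :
    ∑ M ∈ matchingsOn r V, F M =
      ∑ e ∈ edgesThrough r V v, ∑ M ∈ matchingsOn r (V \ e), F (insert e M) := by
  rw [sum_sigma']
  symm
  refine sum_bij (fun x _ ↦ insert x.1 x.2) ?_ ?_ ?_ fun _ _ ↦ rfl
  · rintro ⟨e, M⟩ hx
    obtain ⟨he, hM⟩ := mem_sigma.1 hx
    obtain ⟨heV, hcard, -⟩ := mem_edgesThrough.1 he
    exact insert_mem_matchingsOn heV hcard hM
  · rintro ⟨e, M⟩ hx ⟨e', M'⟩ hx' h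
    obtain ⟨he, hM⟩ := mem_sigma.1 hx
    obtain ⟨he', hM'⟩ := mem_sigma.1 hx'
    obtain ⟨rfl, rfl⟩ := insert_injOn_matchingsOn_sdiff (mem_edgesThrough.1 he).2.2
      (mem_edgesThrough.1 he').2.2 hM hM' h
    rfl
  · intro M hM
    obtain ⟨hcard, -, hunion⟩ := mem_matchingsOn.1 hM
    obtain ⟨e, he, hve⟩ := mem_biUnion.1 (hunion ▸ hv)
    exact ⟨⟨e, M.erase e⟩, mem_sigma.2 ⟨mem_edgesThrough.2
      ⟨subset_of_mem_matchingsOn hM he, hcard e he, hve⟩, erase_mem_matchingsOn hM he⟩,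
      insert_erase he⟩

theorem card_matchingsOn_eq_sum (hv : v ∈ V) :
    #(matchingsOn r V) = ∑ e ∈ edgesThrough r V v, #(matchingsOn r (V \ e)) := by
  simp only [card_eq_sum_ones, sum_matchingsOn_eq hv]

theorem card_matchingsAvoiding_eq_sum [DecidablePred Q] (hv : v ∈ V) :
    #(matchingsAvoiding r V Q) =
      ∑ e ∈ edgesThrough r V v with ¬ Q e, #(matchingsAvoiding r (V \ e) Q) := by
  simp only [matchingsAvoiding, card_filter, sum_matchingsOn_eq hv, forall_mem_insert, sum_filter]
  refine sum_congr rfl fun e _ ↦ ?_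
  by_cases he : Q e
  · simp [he]
  · simp only [he, not_false_eq_true, true_and, if_true]
    congr!

theorem image_image_mem_matchingsOn {f : α → β} (hf : Set.InjOn f V) (hM : M ∈ matchingsOn r V) :
    M.image (image f) ∈ matchingsOn r (V.image f) := by
  obtain ⟨hcard, hdisj, hunion⟩ := mem_matchingsOn.1 hM
  have hMV {e} (he : e ∈ M) : (e : Set α) ⊆ V := coe_subset.2 (subset_of_mem_matchingsOn hM he)
  refine mem_matchingsOn.2 ⟨?_, ?_, ?_⟩
  · rw [forall_mem_image]
    exact fun e he ↦ (card_image_of_injOn (hf.mono (hMV he))).trans (hcard e he)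
  · rw [coe_image]
    rintro _ ⟨e, he, rfl⟩ _ ⟨e', he', rfl⟩ hne
    have : Disjoint e e' := hdisj he he' (ne_of_apply_ne _ hne)
    rw [Function.onFun, id, id, ← disjoint_coe, coe_image, coe_image]
    exact (disjoint_coe.2 this).image hf (hMV he) (hMV he')
  · rw [image_biUnion, ← hunion, biUnion_image]
    rfl

theorem card_matchingsOn_le_card_image {f : α → β} (hf : Set.InjOn f V) :
    #(matchingsOn r V) ≤ #(matchingsOn r (V.image f)) := by
  refine card_le_card_of_injOn (image (image f))
    (fun M hM ↦ image_image_mem_matchingsOn hf hM) ?_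
  exact (image_injOn_powerset_of_injOn (image_injOn_powerset_of_injOn hf)).mono
    (coe_subset.2 (filter_subset _ _))

theorem card_matchingsOn_congr {V W : Finset α} (h : #V = #W) :
    #(matchingsOn r V) = #(matchingsOn r W) := by
  have card_le {V W : Finset α} (h : #V = #W) : #(matchingsOn r V) ≤ #(matchingsOn r W) := by
    rcases W.eq_empty_or_nonempty with rfl | ⟨w, -⟩
    · rw [card_eq_zero.1 h]
    have : Nonempty α := ⟨w⟩
    obtain ⟨f, hf⟩ := V.finite_toSet.exists_bijOn_of_encard_eq (t := (W : Set α)) (by simp [h])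
    have hVW : V.image f = W := by rw [← coe_inj, coe_image, hf.image_eq]
    exact hVW ▸ card_matchingsOn_le_card_image hf.injOn
  exact (card_le h).antisymm (card_le h.symm)

theorem card_matchingsOn_sdiff_congr {e' : Finset α} (he : e ∈ edgesThrough r V v)
    (he' : e' ∈ edgesThrough r V v) :
    #(matchingsOn r (V \ e)) = #(matchingsOn r (V \ e')) := by
  obtain ⟨heV, hcard, -⟩ := mem_edgesThrough.1 he
  obtain ⟨heV', hcard', -⟩ := mem_edgesThrough.1 he'
  apply card_matchingsOn_congr
  rw [card_sdiff_of_subset heV, card_sdiff_of_subset heV', hcard, hcard']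

theorem matchingsOn_nonempty {n : ℕ} (hV : #V = r * n) :
    (matchingsOn r V).Nonempty := by
  induction n generalizing V with
  | zero =>
    obtain rfl : V = ∅ := card_eq_zero.1 hV
    exact ⟨∅, mem_matchingsOn.2 (by simp)⟩
  | succ n ih =>
    rw [mul_add_one] at hV
    obtain ⟨e, heV, he⟩ := exists_subset_card_eq (show r ≤ #V by lia)
    obtain ⟨M, hM⟩ := ih (V := V \ e) (by rw [card_sdiff_of_subset heV, hV, he]; lia)
    exact ⟨insert e M, insert_mem_matchingsOn heV he hM⟩

theorem card_edgesThrough_le : #(edgesThrough r V v) ≤ #V ^ (r - 1) := by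
  have hmaps : Set.MapsTo (erase · v) (edgesThrough r V v) ((V.erase v).powersetCard (r - 1)) := by
    intro e he
    obtain ⟨heV, rfl, hve⟩ := mem_edgesThrough.1 he
    exact mem_powersetCard.2 ⟨erase_subset_erase v heV, card_erase_of_mem hve⟩
  have hinj : Set.InjOn (erase · v) (edgesThrough r V v : Set (Finset α)) :=
    fun e he e' he' h ↦ by
      rw [← insert_erase (mem_edgesThrough.1 he).2.2, ← insert_erase (mem_edgesThrough.1 he').2.2]
      exact congrArg (insert v) h
  calc #(edgesThrough r V v) ≤ #((V.erase v).powersetCard (r - 1)) :=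
        card_le_card_of_injOn _ hmaps hinj
    _ ≤ #(V.erase v) ^ (r - 1) := by rw [card_powersetCard]; exact Nat.choose_le_pow _ _
    _ ≤ #V ^ (r - 1) := Nat.pow_le_pow_left card_erase_le _

theorem card_matchingsAvoiding_le_of_edgesThrough [DecidablePred Q] {p q : ℝ} (hv : v ∈ V)
    (hq : 0 ≤ q) (hp : p * #(edgesThrough r V v) ≤ #{e ∈ edgesThrough r V v | Q e})
    (hrest : ∀ e ∈ edgesThrough r V v,
      (#(matchingsAvoiding r (V \ e) Q) : ℝ) ≤ q * #(matchingsOn r (V \ e))) :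
    (#(matchingsAvoiding r V Q) : ℝ) ≤ (1 - p) * q * #(matchingsOn r V) := by
  obtain ⟨m, hm⟩ : ∃ m, ∀ e ∈ edgesThrough r V v, #(matchingsOn r (V \ e)) = m := by
    rcases (edgesThrough r V v).eq_empty_or_nonempty with hE | ⟨e₀, he₀⟩
    · simp [hE]
    · exact ⟨_, fun e he ↦ card_matchingsOn_sdiff_congr he he₀⟩
  have hsplit : (#{e ∈ edgesThrough r V v | Q e} : ℝ) + #{e ∈ edgesThrough r V v | ¬ Q e} =
      #(edgesThrough r V v) := mod_cast card_filter_add_card_filter_not Q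
  calc (#(matchingsAvoiding r V Q) : ℝ)
      = ∑ e ∈ edgesThrough r V v with ¬ Q e, (#(matchingsAvoiding r (V \ e) Q) : ℝ) := by
        rw [card_matchingsAvoiding_eq_sum hv, Nat.cast_sum]
    _ ≤ ∑ e ∈ edgesThrough r V v with ¬ Q e, q * (m : ℝ) := by
        refine sum_le_sum fun e he ↦ ?_
        have he := (mem_filter.1 he).1
        exact hm e he ▸ hrest e he
    _ = #{e ∈ edgesThrough r V v | ¬ Q e} * (q * m) := by rw [sum_const, nsmul_eq_mul]
    _ ≤ ((1 - p) * #(edgesThrough r V v)) * (q * m) := by gcongr; linarith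
    _ = (1 - p) * q * #(matchingsOn r V) := by
        rw [card_matchingsOn_eq_sum hv, sum_congr rfl hm, sum_const, smul_eq_mul, Nat.cast_mul]
        ring

theorem pow_le_card_edgesThrough_image_eq {s : ℕ} (c : α → ι) {h : Finset ι} (hh : #h = r)
    (hv : v ∈ V) (hvh : c v ∈ h) (hs : ∀ i ∈ h, s ≤ #{x ∈ V | c x = i}) :
    s ^ (r - 1) ≤ #{e ∈ edgesThrough r V v | e.image c = h} := by
  have hcard : #(h.erase (c v)) = r - 1 := by rw [card_erase_of_mem hvh, hh]
  have hr : r - 1 + 1 = r := by have := card_pos.2 ⟨_, hvh⟩; lia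
  have hnotMem {e : Finset α} (he : e.image c = h.erase (c v)) : v ∉ e :=
    fun hve ↦ notMem_erase (c v) h (he ▸ mem_image_of_mem c hve)
  rw [← hcard]
  refine (pow_card_le_card_powersetCard_image_eq c fun i hi ↦ hs i (mem_of_mem_erase hi)).trans
    (card_le_card_of_injOn (insert v) (fun e he ↦ ?_) fun e he e' he' hee' ↦ ?_)
  · obtain ⟨he, himage⟩ := mem_filter.1 he
    obtain ⟨heV, hecard⟩ := mem_powersetCard.1 he
    refine mem_filter.2 ⟨mem_edgesThrough.2 ⟨insert_subset hv heV, ?_, mem_insert_self v e⟩, ?_⟩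
    · rw [card_insert_of_notMem (hnotMem himage), hecard, hcard, hr]
    · rw [image_insert, himage, insert_erase hvh]
  · rw [← erase_insert (hnotMem (mem_filter.1 he).2), hee',
      erase_insert (hnotMem (mem_filter.1 he').2)]

/-- Expose `t` edges one at a time, each at a vertex whose colour lies in `h`. They use at most
`r * t` vertices, so every colour class still has `s` vertices at each step and the exposed edge
has colour set `h` with probability at least `(s / N) ^ (r - 1)`. -/
theorem card_matchingsAvoiding_image_eq_le (hr : 0 < r) {N s t : ℕ} (c : α → ι) {h : Finset ι}
    (hh : #h = r) (hV : #V ≤ N) (hs : ∀ i ∈ h, s + r * t ≤ #{x ∈ V | c x = i}) :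
    (#(matchingsAvoiding r V fun e ↦ e.image c = h) : ℝ) ≤
      (1 - ((s : ℝ) / N) ^ (r - 1)) ^ t * #(matchingsOn r V) := by
  obtain ⟨i₀, hi₀⟩ : h.Nonempty := card_pos.1 (hh ▸ hr)
  have hsN : s ≤ N := calc
    s ≤ s + r * t := Nat.le_add_right _ _
    _ ≤ #{x ∈ V | c x = i₀} := hs i₀ hi₀
    _ ≤ N := (card_filter_le _ _).trans hV
  have hq : 0 ≤ 1 - ((s : ℝ) / N) ^ (r - 1) :=
    sub_nonneg.2 (pow_le_one₀ (by positivity) (div_le_one_of_le₀ (mod_cast hsN) (by positivity)))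
  induction t generalizing V with
  | zero =>
    rw [pow_zero, one_mul, Nat.cast_le]
    exact card_matchingsAvoiding_le
  | succ t ih =>
    obtain ⟨v, hv⟩ : ({x ∈ V | c x = i₀} : Finset α).Nonempty :=
      card_pos.1 (lt_of_lt_of_le (by positivity) (hs i₀ hi₀))
    obtain ⟨hvV, rfl⟩ := mem_filter.1 hv
    rw [pow_succ' (1 - _)]
    refine card_matchingsAvoiding_le_of_edgesThrough hvV (by positivity) ?_ fun e he ↦ ih ?_ ?_
    · have hgood : s ^ (r - 1) ≤ #{e ∈ edgesThrough r V v | e.image c = h} :=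
        pow_le_card_edgesThrough_image_eq c hh hvV hi₀ fun i hi ↦
          (Nat.le_add_right _ _).trans (hs i hi)
      have hall : #(edgesThrough r V v) ≤ N ^ (r - 1) :=
        card_edgesThrough_le.trans (Nat.pow_le_pow_left hV _)
      calc ((s : ℝ) / N) ^ (r - 1) * #(edgesThrough r V v)
          ≤ ((s : ℝ) / N) ^ (r - 1) * N ^ (r - 1) := by gcongr; exact mod_cast hall
        _ ≤ (s : ℝ) ^ (r - 1) := by
          rw [div_pow]; exact mul_le_of_le_div₀ (by positivity) (by positivity) le_rfl
        _ ≤ _ := mod_cast hgood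
    · exact (card_le_card sdiff_subset).trans hV
    · intro i hi
      have hloss : #{x ∈ V | c x = i} ≤ #{x ∈ V \ e | c x = i} + #e := by
        have : {x ∈ V | c x = i} \ e = {x ∈ V \ e | c x = i} := by grind
        exact this ▸ card_le_card_sdiff_add_card
      have := hs i hi
      rw [(mem_edgesThrough.1 he).2.1] at hloss
      lia

end MatchingsOn

section RandomMatching

variable {r n k s t m : ℕ} {H M : Finset (Finset ℕ)}

theorem matchingFamilies_eq_matchingsOn (hr : 0 < r) :
    matchingFamilies r n = matchingsOn r (Icc 1 (r * n)) := by
  ext M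
  rw [matchingFamilies, mem_filter, matchingsOn, mem_filter]
  refine and_congr_right fun _ ↦ ⟨fun h ↦ h.2, fun h ↦ ⟨?_, h⟩⟩
  obtain ⟨hcard, hdisj, hunion⟩ := h
  have hsum : #(M.biUnion id) = ∑ e ∈ M, #e := card_biUnion hdisj
  have : #M * r = n * r := by
    rw [← sum_const_nat hcard, ← hsum, hunion, Nat.card_Icc, Nat.add_sub_cancel, mul_comm]
  exact Nat.eq_of_mul_eq_mul_right hr this

theorem card_matchingFamilies_pos (hr : 0 < r) : 0 < #(matchingFamilies r n) := by
  rw [matchingFamilies_eq_matchingsOn hr]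
  exact card_pos.2 (matchingsOn_nonempty (n := n) (by simp))

theorem prob_le_one (A : Finset (Finset ℕ) → Prop) : prob r n A ≤ 1 :=
  div_le_one_of_le₀ (mod_cast card_filter_le _ _) (Nat.cast_nonneg _)

theorem one_sub_sum_prob_le {ι : Type*} (hr : 0 < r) {S : Finset ι}
    {A : Finset (Finset ℕ) → Prop} {B : ι → Finset (Finset ℕ) → Prop}
    (hAB : ∀ M ∈ matchingFamilies r n, (∀ i ∈ S, ¬ B i M) → A M) :
    1 - ∑ i ∈ S, prob r n (B i) ≤ prob r n A := by
  have hcover : matchingFamilies r n ⊆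
      {M ∈ matchingFamilies r n | A M} ∪ S.biUnion fun i ↦ {M ∈ matchingFamilies r n | B i M} := by
    intro M hM
    simp only [mem_union, mem_filter, mem_biUnion, hM, true_and]
    by_contra! h
    exact h.1 (hAB M hM h.2)
  have hcard : (#(matchingFamilies r n) : ℝ) ≤ #{M ∈ matchingFamilies r n | A M} +
      ∑ i ∈ S, (#{M ∈ matchingFamilies r n | B i M} : ℝ) :=
    mod_cast (card_le_card hcover).trans <| (card_union_le _ _).trans <| by
      gcongr
      exact card_biUnion_le
  have hpos : (0 : ℝ) < #(matchingFamilies r n) := mod_cast card_matchingFamilies_pos hr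
  simp only [prob]
  rw [← sum_div, sub_le_iff_le_add, ← add_div, le_div_iff₀ hpos, one_mul]
  exact hcard

theorem prob_forall_image_ne_le {ι : Type*} [DecidableEq ι] (hr : 0 < r) (c : ℕ → ι)
    {h : Finset ι} (hh : #h = r) (hs : ∀ i ∈ h, s + r * t ≤ #{x ∈ Icc 1 (r * n) | c x = i}) :
    prob r n (fun M ↦ ∀ e ∈ M, e.image c ≠ h) ≤
      (1 - ((s : ℝ) / (r * n : ℕ)) ^ (r - 1)) ^ t := by
  have hpos : (0 : ℝ) < #(matchingFamilies r n) := mod_cast card_matchingFamilies_pos hr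
  rw [prob, div_le_iff₀ hpos, matchingFamilies_eq_matchingsOn hr]
  have hle := card_matchingsAvoiding_image_eq_le (N := r * n) hr c hh (by simp) hs
  rw [matchingsAvoiding] at hle
  refine (congrArg Nat.cast (congrArg card ?_)).trans_le hle
  congr!

theorem containsCopy_of_monotone {φ : ℕ → ℕ} (hφ : Monotone φ) (hH : IsOrderedMatching r k H)
    (hM : ∀ e ∈ M, #e = r) (hcopy : ∀ h ∈ H, ∃ e ∈ M, e.image φ = h) : ContainsCopy r k H M := by
  obtain ⟨hHcard, hHr, hHdisj, hHunion⟩ := hH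
  choose! ψ hψM hψ using hcopy
  have hψinj : Set.InjOn ψ H := fun a ha b hb hab ↦ by rw [← hψ a ha, ← hψ b hb, hab]
  have hφinj : Set.InjOn φ ((H.image ψ).biUnion id) := by
    intro x hx y hy hxy
    simp only [image_biUnion, coe_biUnion, Set.mem_iUnion, id, mem_coe] at hx hy
    obtain ⟨a, ha, hxa⟩ := hx
    obtain ⟨b, hb, hyb⟩ := hy
    have hφa : φ x ∈ a := hψ a ha ▸ mem_image_of_mem φ hxa
    have hφb : φ x ∈ b := hxy ▸ hψ b hb ▸ mem_image_of_mem φ hyb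
    obtain rfl : a = b := by_contra fun hab ↦ disjoint_left.1 (hHdisj a ha b hb hab) hφa hφb
    exact card_image_iff.1 (by rw [hψ a ha, hHr a ha, hM _ (hψM a ha)]) hxa hyb hxy
  refine ⟨H.image ψ, image_subset_iff.2 hψM, ?_, φ, (hφ.monotoneOn _).strictMonoOn_of_injOn hφinj,
    ?_, ?_⟩
  · rw [card_image_of_injOn hψinj, hHcard]
  · rw [image_biUnion, biUnion_image, ← hHunion]
    exact biUnion_congr rfl hψ
  · rw [image_image]
    exact (image_congr hψ).trans image_id

theorem monotone_ceilDiv (L : ℕ) : Monotone fun x : ℕ ↦ x ⌈/⌉ L := by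
  rcases L.eq_zero_or_pos with rfl | hL
  · simpa only [ceilDiv_zero] using monotone_const
  · exact (gc_mul_ceilDiv hL).monotone_l

theorem le_card_filter_ceilDiv_eq {L N a i : ℕ} (hi : i ∈ Icc 1 a) (haN : a * L ≤ N) :
    L ≤ #{x ∈ Icc 1 N | x ⌈/⌉ L = i} := by
  rcases L.eq_zero_or_pos with rfl | hL
  · exact Nat.zero_le _
  obtain ⟨hi1, hia⟩ := mem_Icc.1 hi
  obtain ⟨j, rfl⟩ := Nat.exists_eq_add_of_le' hi1
  have hblock : Ioc (L * j) (L * (j + 1)) ⊆ {x ∈ Icc 1 N | x ⌈/⌉ L = j + 1} := by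
    intro x hx
    obtain ⟨hjx, hxj⟩ := mem_Ioc.1 hx
    have hxN : x ≤ N := calc
      x ≤ L * (j + 1) := hxj
      _ ≤ L * a := by gcongr
      _ ≤ N := by rwa [mul_comm]
    refine mem_filter.2 ⟨mem_Icc.2 ⟨by lia, hxN⟩, le_antisymm ?_ (Nat.lt_of_not_le ?_)⟩
    · rwa [ceilDiv_le_iff_le_mul hL]
    · rwa [ceilDiv_le_iff_le_mul hL, not_le]
  calc L = #(Ioc (L * j) (L * (j + 1))) := by
        rw [Nat.card_Ioc, mul_add_one, Nat.add_sub_cancel_left]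
    _ ≤ _ := card_le_card hblock

theorem one_sub_mul_pow_le_prob_containsCopy (hr : 0 < r) (hH : IsOrderedMatching r k H)
    (hkn : k * (s + r * t) ≤ n) :
    1 - k * (1 - ((s : ℝ) / (r * n : ℕ)) ^ (r - 1)) ^ t ≤ prob r n (ContainsCopy r k H) := by
  set c : ℕ → ℕ := fun x ↦ x ⌈/⌉ (s + r * t)
  have hcopy : ∀ M ∈ matchingFamilies r n, (∀ h ∈ H, ¬ ∀ e ∈ M, e.image c ≠ h) →
      ContainsCopy r k H M := by
    intro M hM hgood
    push Not at hgood
    exact containsCopy_of_monotone (monotone_ceilDiv _) hH (mem_filter.1 hM).2.2.1 hgood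
  have hblocks {h i} (hh : h ∈ H) (hi : i ∈ h) :
      s + r * t ≤ #{x ∈ Icc 1 (r * n) | c x = i} := by
    have hi' : i ∈ Icc 1 (r * k) := hH.2.2.2 ▸ mem_biUnion.2 ⟨h, hh, hi⟩
    exact le_card_filter_ceilDiv_eq hi' (by rw [mul_assoc]; gcongr)
  refine le_trans ?_ (one_sub_sum_prob_le hr hcopy)
  rw [← hH.1, ← nsmul_eq_mul]
  gcongr
  exact sum_le_card_nsmul _ _ _ fun h hh ↦
    prob_forall_image_ne_le hr c (hH.2.1 h hh) fun i hi ↦ hblocks hh hi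

/-- Blocks of length `2 * r * m`, half of which is spent on `m` exposures. -/
theorem one_sub_mul_exp_le_prob_containsCopy (hr : 0 < r) (hH : IsOrderedMatching r k H)
    (hkn : 2 * r * k * m ≤ n) :
    1 - k * Real.exp (-((m : ℝ) ^ r / n ^ (r - 1))) ≤ prob r n (ContainsCopy r k H) := by
  have hprob := one_sub_mul_pow_le_prob_containsCopy (s := r * m) (t := m) hr hH (n := n) (by lia)
  refine le_trans ?_ hprob
  rcases k.eq_zero_or_pos with rfl | hk
  · simp
  have hmn : m ≤ n := (Nat.le_mul_of_pos_left m (by positivity)).trans hkn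
  have hp : ((m : ℝ) / n) ^ (r - 1) ≤ 1 :=
    pow_le_one₀ (by positivity) (div_le_one_of_le₀ (mod_cast hmn) (by positivity))
  have hcancel : ((r * m : ℕ) : ℝ) / (r * n : ℕ) = m / n := by
    push_cast
    exact mul_div_mul_left _ _ (by positivity)
  rw [hcancel]
  gcongr
  calc (1 - ((m : ℝ) / n) ^ (r - 1)) ^ m
      ≤ Real.exp (-((m : ℝ) / n) ^ (r - 1)) ^ m :=
        pow_le_pow_left₀ (sub_nonneg.2 hp) (Real.one_sub_le_exp_neg _) m
    _ = Real.exp (-((m : ℝ) ^ r / n ^ (r - 1))) := by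
        rw [← Real.exp_nat_mul, mul_neg, div_pow, ← mul_div_assoc, mul_pow_sub_one hr.ne']

end RandomMatching

section Asymptotics

variable {r n k : ℕ}

theorem one_sub_div_mul_pow_le_floor_pow (r : ℕ) {x : ℝ} (hx : 1 ≤ x) :
    (1 - r / x) * x ^ r ≤ (⌊x⌋₊ : ℝ) ^ r := by
  have : 0 < x := by positivity
  have hinv : x⁻¹ ≤ 1 := inv_le_one_of_one_le₀ hx
  calc (1 - r / x) * x ^ r = (1 + r * -x⁻¹) * x ^ r := by ring
    _ ≤ (1 + -x⁻¹) ^ r * x ^ r := by gcongr; exact one_add_mul_le_pow (by linarith) r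
    _ = (x - 1) ^ r := by rw [← mul_pow]; congr 1; field_simp; ring
    _ ≤ (⌊x⌋₊ : ℝ) ^ r := by gcongr; exact (Nat.sub_one_lt_floor x).le

theorem log_le_floor_pow_div_pow (hr : 0 < r) (hn : 0 < n) {a : ℝ} (ha : 0 < a)
    (hpow : a ^ r * Real.log n ≤ n) (hlarge : 4 * r ≤ n / a) :
    3 / 4 * Real.log n ≤ (⌊n / a⌋₊ : ℝ) ^ r / (n : ℝ) ^ (r - 1) := by
  set x : ℝ := n / a
  have hx : 1 ≤ x := by
    have : (1 : ℝ) ≤ r := mod_cast hr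
    linarith
  have hrx : 3 / 4 ≤ 1 - r / x := by
    have : r / x ≤ 1 / 4 := (div_le_iff₀ (by positivity)).2 (by linarith)
    linarith
  have hxr : Real.log n * n ^ (r - 1) ≤ x ^ r := by
    rw [div_pow, le_div_iff₀ (by positivity), ← mul_pow_sub_one hr.ne' (n : ℝ)]
    calc Real.log n * n ^ (r - 1) * a ^ r = (a ^ r * Real.log n) * n ^ (r - 1) := by ring
      _ ≤ n * n ^ (r - 1) := by gcongr
  rw [le_div_iff₀ (by positivity)]
  calc 3 / 4 * Real.log n * n ^ (r - 1) = 3 / 4 * (Real.log n * n ^ (r - 1)) := by ring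
    _ ≤ (1 - r / x) * x ^ r := by gcongr
    _ ≤ (⌊x⌋₊ : ℝ) ^ r := one_sub_div_mul_pow_le_floor_pow r hx

theorem one_sub_rpow_le_prob_containsCopy {H : Finset (Finset ℕ)} (hr : 2 ≤ r)
    (hH : IsOrderedMatching r k H) (hn : (4 * r : ℝ) ^ 2 ≤ n)
    (hpow : (2 * r * k : ℝ) ^ r * Real.log n ≤ n) :
    1 - (n : ℝ) ^ (-(1 / 4) : ℝ) ≤ prob r n (ContainsCopy r k H) := by
  have hr2 : (2 : ℝ) ≤ r := mod_cast hr
  have hn3 : (3 : ℝ) ≤ n := by nlinarith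
  have hn0 : (0 : ℝ) < n := by positivity
  rcases k.eq_zero_or_pos with rfl | hk
  · refine le_trans ?_ (one_sub_mul_exp_le_prob_containsCopy (m := 0) (by lia) hH (by simp))
    simpa using Real.rpow_nonneg hn0.le _
  set a : ℝ := 2 * r * k
  have hk1 : (1 : ℝ) ≤ k := mod_cast hk
  have hka : (k : ℝ) ≤ a := by nlinarith
  have hlog : 1 ≤ Real.log n := by
    rw [Real.le_log_iff_exp_le hn0]
    linarith [Real.exp_one_lt_three]
  have ha2 : a ^ 2 ≤ n := calc
    a ^ 2 ≤ a ^ r := pow_le_pow_right₀ (hk1.trans hka) hr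
    _ ≤ a ^ r * Real.log n := le_mul_of_one_le_right (by positivity) hlog
    _ ≤ n := hpow
  have hlarge : 4 * r ≤ n / a := by
    rw [le_div_iff₀ (by positivity)]
    refine (pow_le_pow_iff_left₀ (by positivity) hn0.le two_ne_zero).1 ?_
    calc (4 * r * a) ^ 2 = (4 * r) ^ 2 * a ^ 2 := mul_pow _ _ _
      _ ≤ n * n := by gcongr
      _ = (n : ℝ) ^ 2 := (sq _).symm
  have hfit : 2 * r * k * ⌊n / a⌋₊ ≤ n := by
    have : a * ⌊n / a⌋₊ ≤ n := calc
      a * ⌊n / a⌋₊ ≤ a * (n / a) := by gcongr; exact Nat.floor_le (by positivity)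
      _ = n := mul_div_cancel₀ _ (by positivity)
    exact Nat.cast_le (α := ℝ).1 (by push_cast; exact this)
  have hk_sqrt : (k : ℝ) ≤ (n : ℝ) ^ (1 / 2 : ℝ) := by
    rw [← Real.sqrt_eq_rpow]
    exact hka.trans (Real.le_sqrt_of_sq_le ha2)
  refine le_trans ?_ (one_sub_mul_exp_le_prob_containsCopy (by lia) hH hfit)
  gcongr
  calc k * Real.exp (-((⌊n / a⌋₊ : ℝ) ^ r / n ^ (r - 1)))
      ≤ (n : ℝ) ^ (1 / 2 : ℝ) * Real.exp (-(3 / 4 * Real.log n)) := by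
        gcongr
        exact log_le_floor_pow_div_pow (by lia) (mod_cast hn0) (by positivity) hpow hlarge
    _ = (n : ℝ) ^ (-(1 / 4) : ℝ) := by
        rw [Real.rpow_def_of_pos hn0, Real.rpow_def_of_pos hn0, ← Real.exp_add]
        ring_nf

theorem pow_mul_log_le_of_le_rpow (hr : 0 < r) (hn : 1 < n)
    (hk : (k : ℝ) ≤ (1 / (2 * (r : ℝ))) * ((n : ℝ) / Real.log n) ^ ((1 : ℝ) / (r : ℝ))) :
    (2 * r * k : ℝ) ^ r * Real.log n ≤ n := by
  have hlog : 0 < Real.log n := Real.log_pos (mod_cast hn)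
  rw [div_mul_eq_mul_div, one_mul, le_div_iff₀' (by positivity), one_div] at hk
  rw [← le_div_iff₀ hlog, ← Real.rpow_inv_natCast_pow (x := n / Real.log n) (by positivity) hr.ne']
  exact pow_le_pow_left₀ (by positivity) hk r

end Asymptotics

/-- **Proposition.** If `|H_n| ≤ (1/(2r))·(n/log n)^(1/r)`, then a.a.s. `RM_n^(r)` contains
a copy of `H_n`. -/
theorem aas_contains_growing_copy (r : ℕ) (hr : 2 ≤ r)
    (H : ℕ → Finset (Finset ℕ)) (k : ℕ → ℕ)
    (hH : ∀ n, IsOrderedMatching r (k n) (H n))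
    (hsize : ∀ n, (k n : ℝ) ≤
      (1 / (2 * (r : ℝ))) * ((n : ℝ) / Real.log n) ^ ((1 : ℝ) / (r : ℝ))) :
    Filter.Tendsto (fun n : ℕ => prob r n (ContainsCopy r (k n) (H n)))
      Filter.atTop (nhds 1) := by
  have hlim : Filter.Tendsto (fun n : ℕ ↦ 1 - (n : ℝ) ^ (-(1 / 4) : ℝ)) Filter.atTop (nhds 1) := by
    simpa using ((tendsto_rpow_neg_atTop (by norm_num : (0 : ℝ) < 1 / 4)).comp
      tendsto_natCast_atTop_atTop).const_sub 1
  have hlarge : ∀ᶠ n : ℕ in Filter.atTop, (4 * r : ℝ) ^ 2 ≤ n :=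
    tendsto_natCast_atTop_atTop.eventually_ge_atTop _
  refine tendsto_of_tendsto_of_tendsto_of_le_of_le' hlim tendsto_const_nhds ?_
    (.of_forall fun n ↦ prob_le_one _)
  filter_upwards [hlarge, Filter.eventually_gt_atTop 1] with n hn hn1
  exact one_sub_rpow_le_prob_containsCopy hr (hH n) hn
    (pow_mul_log_le_of_le_rpow (by lia) hn1 (hsize n))
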